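/- Let ℓ be a prime and let α = p/q with p, q positive coprime integers. If the Ruban continued fraction expansion of α terminates, having exactly k partial quotients a_0, …, a_{k−1}, then k ≤ log(min(p, q))/log ℓ + 2 ≤ h(α)/log ℓ + 2, where h(α) = log max(p, q). -/

import Mathlib

open Filter Topology
open scoped Classical

/-- `a` is the `ℓ`-adic integral part of the rational number `α`. -/
def IsRubanFloorQ (p : ℕ) (α a : ℚ) : Prop :=
  (∃ (m : ℤ) (k : ℕ), a = (m : ℚ) / (p : ℚ) ^ k) ∧ 0 ≤ a ∧ a < (p : ℚ) ∧
    padicNorm p (α - a) < 1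

noncomputable def rubanFloorQ (p : ℕ) (α : ℚ) : ℚ :=
  if h : ∃ a : ℚ, IsRubanFloorQ p α a then h.choose else 0

/-- Complete quotients of the Ruban continued fraction expansion of a rational number. -/
noncomputable def rubanCQQ (p : ℕ) (α : ℚ) : ℕ → ℚ
  | 0 => α
  | n + 1 => (rubanCQQ p α n - rubanFloorQ p (rubanCQQ p α n))⁻¹

/-- Partial quotients of the Ruban continued fraction expansion of a rational number. -/
noncomputable def rubanPQQ (p : ℕ) (α : ℚ) (n : ℕ) : ℚ :=
  rubanFloorQ p (rubanCQQ p α n)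

/-- The Ruban continued fraction expansion of `α` terminates. -/
def RubanTerminatesQ (p : ℕ) (α : ℚ) : Prop :=
  ∃ n, rubanCQQ p α n = rubanPQQ p α n

/-!
Write a complete quotient as `N / (ℓ ^ f * D)` with `ℓ ∤ D`. Subtracting its integral part leaves a
number in `ℓ ℤ / D`, and termination forces this number to be nonnegative, so while the expansion
goes on the next complete quotient is `D / (ℓ ^ g * D')` with `g ≥ 1` and `ℓ ∤ D'`. As the integral
part is nonnegative, `ℓ ^ (f + g) * D' ≤ N`. From the second step on `f ≥ 1`, so `ℓ ^ 2 * D' ≤ N`: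
the prime-to-`ℓ` denominators shrink by a factor `ℓ ^ 2` every two steps.
-/

theorem rubanFloorQ_nonneg (ℓ : ℕ) (α : ℚ) : 0 ≤ rubanFloorQ ℓ α := by
  unfold rubanFloorQ
  split_ifs with h
  · exact h.choose_spec.2.1
  · exact le_rfl

theorem rubanCQQ_succ' (ℓ : ℕ) (α : ℚ) (n : ℕ) :
    rubanCQQ ℓ α (n + 1) = rubanCQQ ℓ (α - rubanFloorQ ℓ α)⁻¹ n := by
  induction n with
  | zero => rfl
  | succ n ih => rw [rubanCQQ, ih, rubanCQQ]

/-- The Ruban continued fraction expansion of `α` terminates at step `n`, and not before: it has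
exactly the `n + 1` partial quotients `a_0, …, a_n`. Earlier termination has to be excluded
explicitly, because `rubanCQQ` continues past it with the junk value `0⁻¹ = 0`. -/
def RubanTerminatesAt (ℓ : ℕ) (α : ℚ) (n : ℕ) : Prop :=
  rubanCQQ ℓ α n = rubanPQQ ℓ α n ∧ ∀ m < n, rubanCQQ ℓ α m ≠ rubanPQQ ℓ α m

theorem rubanTerminatesAt_succ_iff {ℓ : ℕ} {α : ℚ} {n : ℕ} :
    RubanTerminatesAt ℓ α (n + 1) ↔
      α ≠ rubanFloorQ ℓ α ∧ RubanTerminatesAt ℓ (α - rubanFloorQ ℓ α)⁻¹ n := by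
  simp only [RubanTerminatesAt, rubanPQQ, Nat.forall_lt_succ_left, rubanCQQ_succ']
  exact and_left_comm

theorem RubanTerminatesAt.nonneg {ℓ : ℕ} {α : ℚ} {n : ℕ} (h : RubanTerminatesAt ℓ α n) :
    0 ≤ α := by
  induction n generalizing α with
  | zero => exact (rubanFloorQ_nonneg ℓ α).trans_eq h.1.symm
  | succ n ih =>
    have hsub : 0 ≤ α - rubanFloorQ ℓ α := inv_nonneg.mp (ih (rubanTerminatesAt_succ_iff.mp h).2)
    exact (rubanFloorQ_nonneg ℓ α).trans (sub_nonneg.mp hsub)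

theorem RubanTerminatesAt.sub_rubanFloorQ_pos {ℓ : ℕ} {α : ℚ} {n : ℕ}
    (h : RubanTerminatesAt ℓ α (n + 1)) : 0 < α - rubanFloorQ ℓ α := by
  obtain ⟨hne, htail⟩ := rubanTerminatesAt_succ_iff.mp h
  exact (inv_nonneg.mp htail.nonneg).lt_of_ne' (sub_ne_zero.mpr hne)

section Prime

variable {ℓ : ℕ} [hℓ : Fact ℓ.Prime]

-- If `ℓ ^ k * α` is `ℓ`-integral, its residue modulo `ℓ ^ (k + 1)`, divided by `ℓ ^ k`, works.
theorem exists_isRubanFloorQ (α : ℚ) : ∃ a, IsRubanFloorQ ℓ α a := by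
  have hℓ₀ : (0 : ℚ) < ℓ := mod_cast hℓ.out.pos
  obtain ⟨k, hk⟩ := pow_unbounded_of_one_lt ‖(α : ℚ_[ℓ])‖
    (show (1 : ℝ) < ℓ from mod_cast hℓ.out.one_lt)
  have hint : ‖(ℓ : ℚ_[ℓ]) ^ k * α‖ ≤ 1 := by
    rw [norm_mul, Padic.norm_p_pow, zpow_neg, zpow_natCast, ← div_eq_inv_mul]
    exact div_le_one_of_le₀ hk.le (by positivity)
  obtain ⟨x, hx⟩ : ∃ x : ℤ_[ℓ], (x : ℚ_[ℓ]) = ℓ ^ k * α := ⟨⟨_, hint⟩, rfl⟩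
  refine ⟨(x.appr (k + 1) : ℚ) / ℓ ^ k, ⟨x.appr (k + 1), k, by simp⟩, by positivity, ?_, ?_⟩
  · rw [div_lt_iff₀ (by positivity), ← pow_succ']
    exact mod_cast x.appr_lt (k + 1)
  · obtain ⟨y, hy⟩ := Ideal.mem_span_singleton.mp (PadicInt.appr_spec (k + 1) x)
    have hy' : (ℓ : ℚ_[ℓ]) ^ k * α - x.appr (k + 1) = ℓ ^ (k + 1) * y := by
      rw [← hx]
      exact_mod_cast congrArg ((↑) : ℤ_[ℓ] → ℚ_[ℓ]) hy
    have hsub : ((α - x.appr (k + 1) / ℓ ^ k : ℚ) : ℚ_[ℓ]) = ℓ * y := by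
      have hℓ₁ : (ℓ : ℚ_[ℓ]) ≠ 0 := mod_cast hℓ.out.ne_zero
      push_cast
      rw [sub_div' (pow_ne_zero k hℓ₁), div_eq_iff (pow_ne_zero k hℓ₁)]
      linear_combination hy'
    have hnorm : ‖((α - x.appr (k + 1) / ℓ ^ k : ℚ) : ℚ_[ℓ])‖ < 1 := by
      rw [hsub, norm_mul]
      exact mul_lt_one_of_nonneg_of_lt_one_left (norm_nonneg _) Padic.norm_p_lt_one y.norm_le_one
    rw [Padic.eq_padicNorm] at hnorm
    exact_mod_cast hnorm

theorem isRubanFloorQ_rubanFloorQ (α : ℚ) : IsRubanFloorQ ℓ α (rubanFloorQ ℓ α) := by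
  have h := exists_isRubanFloorQ (ℓ := ℓ) α
  rw [rubanFloorQ, dif_pos h]
  exact h.choose_spec

theorem exists_int_eq_mul_of_padicNorm_lt_one {z : ℤ} {k : ℕ}
    (h : padicNorm ℓ (z / ℓ ^ k) < 1) : ∃ t : ℤ, (z : ℚ) / ℓ ^ k = ℓ * t := by
  have hℓ₀ : (ℓ : ℚ) ≠ 0 := mod_cast hℓ.out.ne_zero
  induction k generalizing z with
  | zero =>
    rw [pow_zero, div_one, padicNorm.int_lt_one_iff] at h
    obtain ⟨t, rfl⟩ := h
    exact ⟨t, by simp⟩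
  | succ k ih =>
    have hz : padicNorm ℓ z < 1 := by
      rw [← div_mul_cancel₀ (z : ℚ) (pow_ne_zero (k + 1) hℓ₀), padicNorm.mul]
      exact mul_lt_one_of_nonneg_of_lt_one_left (padicNorm.nonneg _) h
        (mod_cast padicNorm.of_nat (ℓ ^ (k + 1)))
    obtain ⟨w, rfl⟩ := (padicNorm.int_lt_one_iff z).mp hz
    have hw : ((ℓ * w : ℤ) : ℚ) / ℓ ^ (k + 1) = w / ℓ ^ k := by
      push_cast
      rw [pow_succ', mul_div_mul_left _ _ hℓ₀]
    rw [hw] at h ⊢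
    exact ih h

theorem IsRubanFloorQ.exists_sub_eq_mul_div {N D : ℤ} {f : ℕ} {a : ℚ} (hD : ¬ (ℓ : ℤ) ∣ D)
    (ha : IsRubanFloorQ ℓ (N / (ℓ ^ f * D)) a) :
    ∃ t : ℤ, (N : ℚ) / (ℓ ^ f * D) - a = ℓ * t / D := by
  obtain ⟨⟨m, k, rfl⟩, -, -, hnorm⟩ := ha
  have hℓ₀ : (ℓ : ℚ) ≠ 0 := mod_cast hℓ.out.ne_zero
  have hD₀ : (D : ℚ) ≠ 0 := mod_cast fun h : D = 0 => hD (h ▸ dvd_zero _)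
  set β : ℚ := N / (ℓ ^ f * D) - m / ℓ ^ k with hβ
  have hβD : β * D = ((N * ℓ ^ k - m * D * ℓ ^ f : ℤ) : ℚ) / ℓ ^ (f + k) := by
    rw [hβ]
    push_cast
    field_simp
    ring
  have hnormD : padicNorm ℓ (β * D) < 1 := by
    rwa [padicNorm.mul, (padicNorm.int_eq_one_iff D).mpr hD, mul_one]
  rw [hβD] at hnormD
  obtain ⟨t, ht⟩ := exists_int_eq_mul_of_padicNorm_lt_one hnormD
  exact ⟨t, by rw [eq_div_iff hD₀, hβD, ht]⟩

theorem IsRubanFloorQ.exists_inv_sub_eq {N D f : ℕ} {a : ℚ} (hD : ¬ ℓ ∣ D)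
    (ha : IsRubanFloorQ ℓ (N / (ℓ ^ f * D)) a) (hpos : 0 < (N : ℚ) / (ℓ ^ f * D) - a) :
    ∃ D' g : ℕ, ¬ ℓ ∣ D' ∧ ℓ ^ (f + (g + 1)) * D' ≤ N ∧
      ((N : ℚ) / (ℓ ^ f * D) - a)⁻¹ = D / (ℓ ^ (g + 1) * D') := by
  have hℓ₀ : (0 : ℚ) < ℓ := mod_cast hℓ.out.pos
  have hD₀ : (0 : ℚ) < D := by
    exact mod_cast Nat.pos_of_ne_zero fun h => hD (h ▸ dvd_zero _)
  obtain ⟨t, ht⟩ : ∃ t : ℤ, (N : ℚ) / (ℓ ^ f * D) - a = ℓ * t / D := by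
    have hD' : ¬ (ℓ : ℤ) ∣ D := mod_cast hD
    simpa only [Int.cast_natCast] using
      IsRubanFloorQ.exists_sub_eq_mul_div (N := N) hD' (by simpa only [Int.cast_natCast] using ha)
  have ht₀ : 0 < t := by
    rw [ht, div_pos_iff_of_pos_right hD₀, mul_pos_iff_of_pos_left hℓ₀] at hpos
    exact_mod_cast hpos
  lift t to ℕ using ht₀.le
  obtain ⟨g, D', hD', rfl⟩ :=
    Nat.exists_eq_pow_mul_and_not_dvd (Nat.cast_pos.mp ht₀).ne' ℓ hℓ.out.ne_one
  have hβ : (N : ℚ) / (ℓ ^ f * D) - a = ℓ ^ (g + 1) * D' / D := by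
    rw [ht]
    push_cast
    ring
  refine ⟨D', g, hD', ?_, by rw [hβ, inv_div]⟩
  have hle : (ℓ : ℚ) ^ (g + 1) * D' / D ≤ N / ℓ ^ f / D := by
    rw [← hβ, div_div]
    exact sub_le_self _ ha.2.1
  have hle' : (ℓ : ℚ) ^ (g + 1) * D' ≤ N / ℓ ^ f := (div_le_div_iff_of_pos_right hD₀).mp hle
  rw [le_div_iff₀' (by positivity), ← mul_assoc, ← pow_add] at hle'
  exact_mod_cast hle'

theorem RubanTerminatesAt.exists_tail {N D f n : ℕ} (hD : ¬ ℓ ∣ D)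
    (h : RubanTerminatesAt ℓ (N / (ℓ ^ f * D)) (n + 1)) :
    ∃ D' g : ℕ, ¬ ℓ ∣ D' ∧ ℓ ^ (f + (g + 1)) * D' ≤ N ∧
      RubanTerminatesAt ℓ (D / (ℓ ^ (g + 1) * D')) n := by
  obtain ⟨D', g, hD', hle, hinv⟩ :=
    (isRubanFloorQ_rubanFloorQ _).exists_inv_sub_eq hD h.sub_rubanFloorQ_pos
  exact ⟨D', g, hD', hle, hinv ▸ (rubanTerminatesAt_succ_iff.mp h).2⟩

theorem RubanTerminatesAt.pow_le_of_den_eq_pow_succ_mul {N D f n : ℕ} (hN : 0 < N) (hD : ¬ ℓ ∣ D)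
    (h : RubanTerminatesAt ℓ (N / (ℓ ^ (f + 1) * D)) n) : ℓ ^ n ≤ N ∧ ℓ ^ n ≤ ℓ * D := by
  have hD₀ : 0 < D := Nat.pos_of_ne_zero fun h => hD (h ▸ dvd_zero _)
  induction n generalizing N D f with
  | zero => exact ⟨hN, Nat.mul_pos hℓ.out.pos hD₀⟩
  | succ n ih =>
    obtain ⟨D', g, hD', hle, htail⟩ := h.exists_tail hD
    have hD'₀ : 0 < D' := Nat.pos_of_ne_zero fun h => hD' (h ▸ dvd_zero _)
    obtain ⟨hpowD, hpowD'⟩ := ih hD₀ hD' htail hD'₀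
    constructor
    · calc
        ℓ ^ (n + 1) = ℓ * ℓ ^ n := pow_succ' ℓ n
        _ ≤ ℓ * (ℓ * D') := by gcongr
        _ = ℓ ^ 2 * D' := by ring
        _ ≤ ℓ ^ (f + 1 + (g + 1)) * D' := by
          gcongr
          · exact hℓ.out.one_le
          · omega
        _ ≤ N := hle
    · rw [pow_succ']
      gcongr

theorem RubanTerminatesAt.pow_le_mul_of_den_eq_pow_mul {N D f n : ℕ} (hN : 0 < N) (hD : ¬ ℓ ∣ D)
    (h : RubanTerminatesAt ℓ (N / (ℓ ^ f * D)) n) : ℓ ^ n ≤ ℓ * N ∧ ℓ ^ n ≤ ℓ * D := by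
  have hD₀ : 0 < D := Nat.pos_of_ne_zero fun h => hD (h ▸ dvd_zero _)
  cases n with
  | zero => exact ⟨Nat.mul_pos hℓ.out.pos hN, Nat.mul_pos hℓ.out.pos hD₀⟩
  | succ n =>
    obtain ⟨D', g, hD', hle, htail⟩ := h.exists_tail hD
    obtain ⟨hpowD, hpowD'⟩ := htail.pow_le_of_den_eq_pow_succ_mul hD₀ hD'
    rw [pow_succ']
    constructor <;> gcongr
    calc
      ℓ ^ n ≤ ℓ * D' := hpowD'
      _ ≤ ℓ ^ (f + (g + 1)) * D' := by
        gcongr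
        exact Nat.le_self_pow (by omega) ℓ
      _ ≤ N := hle

theorem RubanTerminatesAt.pow_le_mul_min {p q n : ℕ} (hp : 0 < p) (hq : 0 < q)
    (h : RubanTerminatesAt ℓ (p / q) n) : ℓ ^ n ≤ ℓ * min p q := by
  obtain ⟨f, D, hD, rfl⟩ := Nat.exists_eq_pow_mul_and_not_dvd hq.ne' ℓ hℓ.out.ne_one
  have h' : RubanTerminatesAt ℓ (p / (ℓ ^ f * D)) n := mod_cast h
  obtain ⟨hpow_num, hpow_den⟩ := h'.pow_le_mul_of_den_eq_pow_mul hp hD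
  have hle : D ≤ ℓ ^ f * D := Nat.le_mul_of_pos_left D (pow_pos hℓ.out.pos f)
  rw [← Nat.mul_min_mul_left]
  exact le_min hpow_num (hpow_den.trans (by gcongr))

end Prime

theorem ruban_rational_finite_expansion_length_bound_general
    (ℓ : ℕ) (hℓ : ℓ.Prime) (p q : ℕ) (hp : 0 < p) (hq : 0 < q) (n : ℕ)
    (h : RubanTerminatesAt ℓ (p / q) n) :
    (n + 1 : ℝ) ≤ Real.log (min p q) / Real.log ℓ + 2 ∧
      Real.log (min p q) / Real.log ℓ + 2 ≤ Real.log (max p q) / Real.log ℓ + 2 := by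
  have : Fact ℓ.Prime := ⟨hℓ⟩
  have hℓ₀ : (0 : ℝ) < ℓ := mod_cast hℓ.pos
  have hlog : 0 < Real.log ℓ := Real.log_pos (mod_cast hℓ.one_lt)
  have hmin : (0 : ℝ) < min (p : ℝ) q := lt_min (mod_cast hp) (mod_cast hq)
  have hmax : Real.log (min p q) ≤ Real.log (max p q) := Real.log_le_log hmin min_le_max
  refine ⟨?_, by gcongr⟩
  have hpow : (ℓ : ℝ) ^ n ≤ ℓ * min (p : ℝ) q := mod_cast h.pow_le_mul_min hp hq
  have hlog_le : n * Real.log ℓ ≤ Real.log ℓ + Real.log (min p q) := by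
    rw [← Real.log_pow, ← Real.log_mul hℓ₀.ne' hmin.ne']
    exact Real.log_le_log (by positivity) hpow
  have hn : (n - 1 : ℝ) ≤ Real.log (min p q) / Real.log ℓ := by
    rw [le_div_iff₀ hlog]
    linarith
  linarith

/-- If `α = p/q` (with `p, q` positive coprime integers) has a terminating
Ruban continued fraction expansion with exactly `k` partial quotients, then
`k ≤ log(min(p,q))/log ℓ + 2 ≤ h(α)/log ℓ + 2` with `h(α) = log (max p q)`. -/
theorem ruban_rational_finite_expansion_length_bound
    (ℓ : ℕ) (hℓ : ℓ.Prime) (p q : ℕ) (hp : 0 < p) (hq : 0 < q) (hpq : Nat.Coprime p q)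
    (k : ℕ) (hk : 1 ≤ k)
    (hterm : rubanCQQ ℓ ((p : ℚ) / (q : ℚ)) (k - 1) = rubanPQQ ℓ ((p : ℚ) / (q : ℚ)) (k - 1))
    (hmin : ∀ m, m < k - 1 →
      rubanCQQ ℓ ((p : ℚ) / (q : ℚ)) m ≠ rubanPQQ ℓ ((p : ℚ) / (q : ℚ)) m) :
    (k : ℝ) ≤ Real.log (min p q) / Real.log ℓ + 2 ∧
      Real.log (min p q) / Real.log ℓ + 2 ≤ Real.log (max p q) / Real.log ℓ + 2 := by
  obtain ⟨n, rfl⟩ := Nat.exists_eq_add_of_le' hk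
  exact mod_cast ruban_rational_finite_expansion_length_bound_general ℓ hℓ p q hp hq n ⟨hterm, hmin⟩
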